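/- (Karlsson–Minton summation.) Let a, b, c_1,...,c_r be complex numbers and m_1,...,m_r nonnegative integers with Re(a + m_1 + ... + m_r) < 1 and b, c_1,...,c_r, b-a not nonpositive integers. Then the hypergeometric series ∑_{k=0}^∞ (a)_k (b)_k ∏_{i=1}^r (c_i+m_i)_k / (k! (b+1)_k ∏_{i=1}^r (c_i)_k) equals Γ(b+1)Γ(1-a)/Γ(1+b-a) · ∏_{i=1}^r (c_i - b)_{m_i}/(c_i)_{m_i}, where (x)_k = x(x+1)⋯(x+k-1) is the Pochhammer symbol. -/

import Mathlib

open Finset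

/-- Pochhammer symbol (rising factorial) `(x)_k`. -/
noncomputable def poch (x : ℂ) (k : ℕ) : ℂ := ∏ j ∈ Finset.range k, (x + j)

/-!
Write `[a, k]` for `(a)_k / k!`, which is `Ring.multichoose a k`. Since
`(b)_k / (b + 1)_k = b / (k + b)` and `(c + m)_k / (c)_k = (c + k)_m / (c)_m`, the series is a
multiple of `∑ [a, k] P(k) / (k + b)` with `P` a polynomial of degree `∑ i, m i`. Divide:
`P(k) = P(-b) + (k + b) Q(k)`.

The quotient contributes `∑ [a, k] Q(k) = 0`: dividing by `X + a` and using
`(k + a) [a, k] = a [a + 1, k]` lowers the degree, down to `∑ [a, k] = (1 - 1)^(-a) = 0`.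

The remainder contributes `P(-b) ∑ [a, k] / (k + b)`. For `0 < re b` this sum is the Beta integral
`∫ x^(b - 1) (1 - x)^(-a)` over `(0, 1)` expanded termwise, and a telescoping recurrence from
`b + 1` to `b` removes the restriction on `b`.
-/

open Filter Topology Asymptotics MeasureTheory Polynomial

section Polynomial

lemma eval_eq_eval_add_sub_mul_eval_divByMonic {R : Type*} [CommRing R] (p : R[X]) (x y : R) :
    p.eval y = p.eval x + (y - x) * (p /ₘ (X - C x)).eval y := by
  conv_lhs => rw [← modByMonic_add_div p (X - C x), modByMonic_X_sub_C_eq_C_eval]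
  simp

lemma degree_divByMonic_X_sub_C_lt {R : Type*} [CommRing R] {p : R[X]} {d : ℕ}
    (hp : p.degree < (d + 1 : ℕ)) (x : R) : (p /ₘ (X - C x)).degree < d := by
  rcases eq_or_ne p 0 with rfl | h0
  · simp
  · have : Nontrivial R := Nontrivial.of_polynomial_ne h0
    refine (degree_divByMonic_lt p (X - C x) h0 (by simp)).trans_le ?_
    exact degree_le_of_natDegree_le
      (Nat.le_of_lt_succ ((natDegree_lt_iff_degree_lt h0).mpr hp))

end Polynomial

section Multichoose

variable {R : Type*} [CommRing R] [BinomialRing R]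

lemma succ_mul_multichoose_succ (r : R) (k : ℕ) :
    (k + 1) * Ring.multichoose r (k + 1) = (r + k) * Ring.multichoose r k := by
  have : IsAddTorsionFree R := BinomialRing.toIsAddTorsionFree
  apply nsmul_right_injective k.factorial_ne_zero
  calc k.factorial • ((k + 1) * Ring.multichoose r (k + 1))
      = (k + 1).factorial • Ring.multichoose r (k + 1) := by
        simp only [nsmul_eq_mul, Nat.factorial_succ]
        push_cast
        ring
    _ = k.factorial • Ring.multichoose r k * (r + k) := by
        simp only [Ring.factorial_nsmul_multichoose_eq_ascPochhammer,
          ascPochhammer_smeval_eq_eval, ascPochhammer_succ_eval]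
    _ = k.factorial • ((r + k) * Ring.multichoose r k) := by
        rw [smul_mul_assoc, mul_comm]

lemma natCast_add_mul_multichoose (r : R) (k : ℕ) :
    (k + r) * Ring.multichoose r k = r * Ring.multichoose (r + 1) k := by
  induction k with
  | zero => simp
  | succ k ih =>
    rw [Ring.multichoose_succ_succ]
    push_cast
    linear_combination ih + succ_mul_multichoose_succ r k

lemma sum_range_succ_ringMultichoose (r : R) (n : ℕ) :
    ∑ k ∈ range (n + 1), Ring.multichoose r k = Ring.multichoose (r + 1) n := by
  induction n with
  | zero => simp
  | succ n ih => rw [sum_range_succ, ih, Ring.multichoose_succ_succ, add_comm]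

end Multichoose

section Poch

lemma add_one_add_natCast_ne_zero {x : ℂ} (hx : ∀ k : ℕ, x + k ≠ 0) (k : ℕ) : x + 1 + k ≠ 0 := by
  simpa only [Nat.cast_add, Nat.cast_one, add_assoc, add_comm (1 : ℂ)] using hx (k + 1)

lemma poch_one (x : ℂ) : poch x 1 = x := by simp [poch]

lemma poch_add (x : ℂ) (m k : ℕ) : poch x (m + k) = poch x m * poch (x + m) k := by
  simp only [poch, prod_range_add, Nat.cast_add, add_assoc]

lemma poch_ne_zero {x : ℂ} (hx : ∀ k : ℕ, x + k ≠ 0) (k : ℕ) : poch x k ≠ 0 :=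
  prod_ne_zero_iff.mpr fun j _ => hx j

lemma poch_add_natCast_div_poch {x : ℂ} (hx : ∀ k : ℕ, x + k ≠ 0) (m k : ℕ) :
    poch (x + m) k / poch x k = poch (x + k) m / poch x m := by
  rw [div_eq_div_iff (poch_ne_zero hx k) (poch_ne_zero hx m), mul_comm, ← poch_add, mul_comm,
    ← poch_add, add_comm]

lemma poch_div_poch_add_one {x : ℂ} (hx : ∀ k : ℕ, x + k ≠ 0) (k : ℕ) :
    poch x k / poch (x + 1) k = x / (k + x) := by
  rw [← inv_div, ← inv_div (k + x), add_comm (k : ℂ)]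
  simpa only [Nat.cast_one, poch_one] using congrArg (·⁻¹) (poch_add_natCast_div_poch hx 1 k)

lemma poch_eq_ascPochhammer_eval (x : ℂ) (k : ℕ) : poch x k = (ascPochhammer ℂ k).eval x := by
  induction k with
  | zero => simp [poch]
  | succ k ih => rw [poch_add, poch_one, ascPochhammer_succ_eval, ih]

lemma poch_div_factorial (x : ℂ) (k : ℕ) : poch x k / k.factorial = Ring.multichoose x k := by
  rw [div_eq_iff (mod_cast k.factorial_ne_zero), poch_eq_ascPochhammer_eval,
    ← ascPochhammer_smeval_eq_eval, ← Ring.factorial_nsmul_multichoose_eq_ascPochhammer,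
    nsmul_eq_mul, mul_comm]

end Poch

section Asymptotics

lemma inv_natCast_add_isBigO (b : ℂ) :
    (fun n : ℕ => ((n : ℂ) + b)⁻¹) =O[atTop] fun n : ℕ => (n : ℝ)⁻¹ := by
  have hquot : (fun n : ℕ => (n : ℂ) / (n + b)) =O[atTop] fun _ : ℕ => (1 : ℝ) :=
    (tendsto_natCast_div_add_atTop b).isBigO_one ℝ
  have hinv : (fun n : ℕ => (n : ℂ)⁻¹) =O[atTop] fun n : ℕ => (n : ℝ)⁻¹ := .of_bound 1 (by simp)
  refine (hquot.mul hinv).congr' ?_ (.of_forall fun n => one_mul _)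
  filter_upwards [eventually_ne_atTop 0] with n hn
  have hn' : (n : ℂ) ≠ 0 := mod_cast hn
  field_simp

lemma multichoose_neg_natCast_eq_zero {m n : ℕ} (h : m < n) :
    Ring.multichoose (-m : ℂ) n = 0 := by
  rw [← poch_div_factorial, poch, prod_eq_zero (mem_range.mpr h) (by simp), zero_div]

lemma multichoose_eq_cpow_mul_inv_GammaSeq {a : ℂ} {n : ℕ} (hn : n ≠ 0)
    (ha : (n : ℂ) + a ≠ 0) :
    Ring.multichoose a n = n ^ a * (Complex.GammaSeq a n)⁻¹ * (n + a)⁻¹ := by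
  have hpow : (n : ℂ) ^ a ≠ 0 := by simp [Complex.cpow_eq_zero_iff, hn]
  have hGamma : Complex.GammaSeq a n = n ^ a * n.factorial / (poch a n * (n + a)) := by
    rw [Complex.GammaSeq, prod_range_succ, poch, add_comm a n]
  rw [hGamma, ← poch_div_factorial]
  field_simp

lemma multichoose_isBigO (a : ℂ) :
    (fun n => Ring.multichoose a n) =O[atTop] fun n : ℕ => (n : ℝ) ^ (a.re - 1) := by
  by_cases ha : ∃ m : ℕ, a = -m
  · obtain ⟨m, rfl⟩ := ha
    refine EventuallyEq.trans_isBigO ?_ (isBigO_zero (E' := ℂ) _ _)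
    filter_upwards [eventually_gt_atTop m] with n hn using multichoose_neg_natCast_eq_zero hn
  · have hadd (n : ℕ) : n + a ≠ 0 := fun h => ha ⟨n, eq_neg_of_add_eq_zero_right h⟩
    have hpow : (fun n : ℕ => (n : ℂ) ^ a) =O[atTop] fun n : ℕ => (n : ℝ) ^ a.re := by
      refine .of_norm_eventuallyLE ?_
      filter_upwards [eventually_gt_atTop 0] with n hn
      exact (Complex.norm_natCast_cpow_of_pos hn a).le
    have hGamma : (fun n : ℕ => (Complex.GammaSeq a n)⁻¹) =O[atTop] fun _ : ℕ => (1 : ℝ) :=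
      ((Complex.GammaSeq_tendsto_Gamma a).inv₀
        (Complex.Gamma_ne_zero fun m h => ha ⟨m, h⟩)).isBigO_one ℝ
    refine ((hpow.mul hGamma).mul (inv_natCast_add_isBigO a)).congr' ?_ ?_
    · filter_upwards [eventually_ne_atTop 0] with n hn
      exact (multichoose_eq_cpow_mul_inv_GammaSeq hn (hadd n)).symm
    · filter_upwards [eventually_ne_atTop 0] with n hn
      rw [Real.rpow_sub_one (mod_cast hn), mul_one, div_eq_mul_inv]

lemma tendsto_multichoose {a : ℂ} (ha : a.re < 1) :
    Tendsto (fun n => Ring.multichoose a n) atTop (𝓝 0) := by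
  refine (multichoose_isBigO a).trans_tendsto ?_
  simpa [Function.comp_def] using (tendsto_rpow_neg_atTop (y := 1 - a.re) (by linarith)).comp
    (tendsto_natCast_atTop_atTop (R := ℝ))

lemma summable_multichoose_div {a : ℂ} (b : ℂ) (ha : a.re < 1) :
    Summable fun k : ℕ => Ring.multichoose a k / (k + b) := by
  refine summable_of_isBigO_nat (Real.summable_nat_rpow.mpr (show a.re - 1 - 1 < -1 by linarith)) ?_
  refine ((multichoose_isBigO a).mul (inv_natCast_add_isBigO b)).congr' ?_ ?_
  · exact .of_forall fun n => (div_eq_mul_inv _ _).symm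
  · filter_upwards [eventually_ne_atTop 0] with n hn
    rw [← div_eq_mul_inv, ← Real.rpow_sub_one (mod_cast hn)]

end Asymptotics

section VanishingSums

lemma hasSum_multichoose {a : ℂ} (ha : a.re < 0) :
    HasSum (fun k => Ring.multichoose a k) 0 := by
  have hs : Summable fun k => Ring.multichoose a k :=
    summable_of_isBigO_nat (Real.summable_nat_rpow.mpr (by linarith)) (multichoose_isBigO a)
  rw [hs.hasSum_iff_tendsto_nat, ← tendsto_add_atTop_iff_nat 1]
  simpa only [sum_range_succ_ringMultichoose] using
    tendsto_multichoose (a := a + 1) (by simpa using ha)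

lemma hasSum_multichoose_mul_eval {a : ℂ} {d : ℕ} {Q : ℂ[X]} (hQ : Q.degree < d)
    (ha : a.re + d < 1) : HasSum (fun k : ℕ => Ring.multichoose a k * Q.eval (k : ℂ)) 0 := by
  induction d generalizing a Q with
  | zero =>
    have hQ0 : Q = 0 := by simpa using hQ
    simp [hQ0]
  | succ d ih =>
    push_cast at ha
    have ha0 : a.re < 0 := by linarith [d.cast_nonneg (α := ℝ)]
    have hconst := (hasSum_multichoose ha0).mul_right (Q.eval (-a))
    have hquot := (ih (a := a + 1) (degree_divByMonic_X_sub_C_lt hQ (-a))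
      (by rw [Complex.add_re, Complex.one_re]; linarith)).mul_left a
    rw [zero_mul] at hconst
    rw [mul_zero] at hquot
    rw [← add_zero (0 : ℂ)]
    refine (hconst.add hquot).congr_fun fun k => ?_
    rw [eval_eq_eval_add_sub_mul_eval_divByMonic Q (-a) k]
    linear_combination
      (Q /ₘ (X - C (-a))).eval (k : ℂ) * natCast_add_mul_multichoose a k

end VanishingSums

section GammaQuotient

lemma integral_Ioo_cpow_sub_one {s : ℂ} (hs : 0 < s.re) :
    ∫ x in Set.Ioo (0 : ℝ) 1, (x : ℂ) ^ (s - 1) = s⁻¹ := by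
  have hs0 : s ≠ 0 := fun h => by simp [h] at hs
  rw [← integral_Ioc_eq_integral_Ioo, ← intervalIntegral.integral_of_le zero_le_one,
    integral_cpow (Or.inl (by simpa using hs))]
  simp [hs0, Complex.zero_cpow]

lemma integral_Ioo_norm_cpow_sub_one {s : ℂ} (hs : 0 < s.re) :
    ∫ x in Set.Ioo (0 : ℝ) 1, ‖(x : ℂ) ^ (s - 1)‖ = s.re⁻¹ := by
  have hnorm : Set.EqOn (fun x : ℝ => ‖(x : ℂ) ^ (s - 1)‖) (fun x => x ^ (s.re - 1))
      (Set.Ioo 0 1) := fun x hx => by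
    simp [Complex.norm_cpow_eq_rpow_re_of_pos hx.1]
  rw [setIntegral_congr_fun measurableSet_Ioo hnorm, ← integral_Ioc_eq_integral_Ioo,
    ← intervalIntegral.integral_of_le zero_le_one, integral_rpow (Or.inl (by linarith))]
  simp [hs.ne']

lemma hasSum_div_natCast_add_integral {u : ℕ → ℂ} {b : ℂ} {f : ℝ → ℂ} (hb : 0 < b.re)
    (hu : Summable fun k : ℕ => ‖u k‖ / (k + b.re))
    (hf : ∀ x ∈ Set.Ioo (0 : ℝ) 1, HasSum (fun k => u k * (x : ℂ) ^ k) (f x)) :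
    HasSum (fun k : ℕ => u k / (k + b))
      (∫ x in Set.Ioo (0 : ℝ) 1, (x : ℂ) ^ (b - 1) * f x) := by
  have hre (k : ℕ) : 0 < (k + b).re := by
    rw [Complex.add_re, Complex.natCast_re]
    positivity
  have hint (k : ℕ) :
      IntegrableOn (fun x : ℝ => u k * (x : ℂ) ^ (k + b - 1)) (Set.Ioo 0 1) :=
    ((intervalIntegral.integrableOn_Ioo_cpow_iff zero_lt_one).mpr
      (by simpa using hre k)).const_mul _
  have hsum : HasSum (fun k : ℕ => u k / (k + b))
      (∫ x in Set.Ioo (0 : ℝ) 1, ∑' k : ℕ, u k * (x : ℂ) ^ (k + b - 1)) := by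
    refine (hasSum_integral_of_summable_integral_norm hint ?_).congr_fun fun k => ?_
    · simpa only [norm_mul, integral_const_mul, integral_Ioo_norm_cpow_sub_one (hre _),
        ← div_eq_mul_inv, Complex.add_re, Complex.natCast_re] using hu
    · rw [integral_const_mul, integral_Ioo_cpow_sub_one (hre k), div_eq_mul_inv]
  have hseries : Set.EqOn (fun x : ℝ => ∑' k : ℕ, u k * (x : ℂ) ^ (k + b - 1))
      (fun x => (x : ℂ) ^ (b - 1) * f x) (Set.Ioo 0 1) := fun x hx => by
    refine (((hf x hx).mul_left _).congr_fun fun k => ?_).tsum_eq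
    rw [add_sub_assoc, Complex.cpow_add _ _ (mod_cast hx.1.ne'), Complex.cpow_natCast]
    ring
  rwa [setIntegral_congr_fun measurableSet_Ioo hseries] at hsum

lemma hasSum_multichoose_mul_pow (a : ℂ) {z : ℂ} (hz : ‖z‖ < 1) :
    HasSum (fun k => Ring.multichoose a k * z ^ k) ((1 - z) ^ (-a)) := by
  have hball := (Complex.one_div_one_sub_cpow_hasFPowerSeriesOnBall_zero a).hasSum (y := z)
    (by simpa [enorm_eq_nnnorm, ← NNReal.coe_lt_coe] using hz)
  simpa only [FormalMultilinearSeries.ofScalars_apply_eq, zero_add, smul_eq_mul,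
    ← Ring.multichoose_eq, one_div, ← Complex.cpow_neg] using hball

lemma hasSum_multichoose_div_of_re_pos {a b : ℂ} (ha : a.re < 1) (hb : 0 < b.re) :
    HasSum (fun k : ℕ => Ring.multichoose a k / (k + b))
      (Complex.Gamma b * Complex.Gamma (1 - a) / Complex.Gamma (1 + b - a)) := by
  have hbeta : Complex.Gamma b * Complex.Gamma (1 - a) / Complex.Gamma (1 + b - a) =
      ∫ x in Set.Ioo (0 : ℝ) 1, (x : ℂ) ^ (b - 1) * (1 - x) ^ (-a) := by
    rw [show 1 + b - a = b + (1 - a) by ring,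
      ← Complex.betaIntegral_eq_Gamma_mul_div b (1 - a) hb (by simpa using ha),
      Complex.betaIntegral, intervalIntegral.integral_of_le zero_le_one,
      integral_Ioc_eq_integral_Ioo, sub_sub_cancel_left]
  rw [hbeta]
  refine hasSum_div_natCast_add_integral hb ?_ fun x hx =>
    hasSum_multichoose_mul_pow a (by simpa [abs_of_pos hx.1] using hx.2)
  refine (summable_multichoose_div (b.re : ℂ) ha).norm.congr fun k => ?_
  rw [norm_div, ← Complex.ofReal_natCast, ← Complex.ofReal_add,
    Complex.norm_of_nonneg (by positivity)]

lemma multichoose_div_telescope (a : ℂ) {b : ℂ} (hb : ∀ k : ℕ, b + k ≠ 0) (k : ℕ) :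
    b * (Ring.multichoose a k / (k + b)) - (1 + b - a) * (Ring.multichoose a k / (k + (b + 1))) =
      Ring.multichoose a (k + 1) * ((k + 1 : ℕ) / ((k + 1 : ℕ) + b)) -
        Ring.multichoose a k * (k / (k + b)) := by
  have hkb : (k + b : ℂ) ≠ 0 := add_comm b k ▸ hb k
  have hkb' : (k + 1 + b : ℂ) ≠ 0 := by simpa only [Nat.cast_succ, add_comm b] using hb (k + 1)
  have hsucc : Ring.multichoose a (k + 1) * ((k + 1) / (k + 1 + b)) =
      (a + k) * Ring.multichoose a k / (k + 1 + b) := by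
    rw [← succ_mul_multichoose_succ]
    ring
  push_cast
  rw [hsucc, show (k : ℂ) + (b + 1) = k + 1 + b by ring]
  field_simp
  ring

lemma hasSum_multichoose_div_of_add_one {a b s : ℂ} (ha : a.re < 1) (hb : ∀ k : ℕ, b + k ≠ 0)
    (hs : HasSum (fun k : ℕ => Ring.multichoose a k / (k + (b + 1))) s) :
    HasSum (fun k : ℕ => Ring.multichoose a k / (k + b)) ((1 + b - a) * s / b) := by
  have hb0 : b ≠ 0 := by simpa using hb 0
  have hsum := (summable_multichoose_div b ha).hasSum
  have hpartial := ((hsum.mul_left b).sub (hs.mul_left (1 + b - a))).tendsto_sum_nat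
  have hboundary : Tendsto (fun n : ℕ => Ring.multichoose a n * (n / (n + b))) atTop (𝓝 0) := by
    simpa using (tendsto_multichoose ha).mul (tendsto_natCast_div_add_atTop b)
  simp only [multichoose_div_telescope a hb, sum_range_sub (fun n : ℕ =>
    Ring.multichoose a n * ((n : ℂ) / (n + b))), Nat.cast_zero, zero_div, mul_zero,
    sub_zero] at hpartial
  have hrec : b * ∑' k : ℕ, Ring.multichoose a k / (k + b) = (1 + b - a) * s :=
    sub_eq_zero.mp (tendsto_nhds_unique hpartial hboundary)
  rwa [← hrec, mul_div_cancel_left₀ _ hb0]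

lemma hasSum_multichoose_div {a b : ℂ} (ha : a.re < 1) (hb : ∀ k : ℕ, b + k ≠ 0)
    (hba : ∀ k : ℕ, 1 + b - a + k ≠ 0) :
    HasSum (fun k : ℕ => Ring.multichoose a k / (k + b))
      (Complex.Gamma b * Complex.Gamma (1 - a) / Complex.Gamma (1 + b - a)) := by
  obtain ⟨n, hn⟩ := exists_nat_gt (-b.re)
  induction n generalizing b with
  | zero => exact hasSum_multichoose_div_of_re_pos ha (by simpa using hn)
  | succ n ih =>
    have hb0 : b ≠ 0 := by simpa using hb 0
    have hba0 : 1 + b - a ≠ 0 := by simpa using hba 0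
    have hshift : 1 + (b + 1) - a = 1 + b - a + 1 := by ring
    have hn' : -(b + 1).re < n := by
      rw [Complex.add_re, Complex.one_re]
      push_cast at hn
      linarith
    have hs := ih (b := b + 1) (add_one_add_natCast_ne_zero hb)
      (hshift ▸ add_one_add_natCast_ne_zero hba) hn'
    convert! hasSum_multichoose_div_of_add_one ha hb hs using 1
    rw [hshift, Complex.Gamma_add_one b hb0, Complex.Gamma_add_one _ hba0]
    field_simp

end GammaQuotient

section KarlssonMinton

lemma hasSum_multichoose_mul_eval_div {a b : ℂ} {P : ℂ[X]} (ha : a.re + P.natDegree < 1)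
    (hb : ∀ k : ℕ, b + k ≠ 0) (hba : ∀ k : ℕ, 1 + b - a + k ≠ 0) :
    HasSum (fun k : ℕ => Ring.multichoose a k * P.eval (k : ℂ) / (k + b))
      (Complex.Gamma b * Complex.Gamma (1 - a) / Complex.Gamma (1 + b - a) * P.eval (-b)) := by
  have ha' : a.re < 1 := by linarith [P.natDegree.cast_nonneg (α := ℝ)]
  have hP : P.degree < (P.natDegree + 1 : ℕ) :=
    degree_le_natDegree.trans_lt (mod_cast P.natDegree.lt_succ_self)
  have hquot := hasSum_multichoose_mul_eval
    (degree_divByMonic_X_sub_C_lt hP (-b)) ha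
  rw [← add_zero (_ * _)]
  refine (((hasSum_multichoose_div ha' hb hba).mul_right _).add hquot).congr_fun fun k => ?_
  have hkb : (k + b : ℂ) ≠ 0 := add_comm b k ▸ hb k
  rw [eval_eq_eval_add_sub_mul_eval_divByMonic P (-b) k]
  field_simp
  ring

variable {ι : Type*} [Fintype ι]

/-- The polynomial `P = ∏ i, (c i + X)_{m i}`. It absorbs the parameters differing by integers,
since `∏ i, (c i + m i)_k / (c i)_k = P(k) / P(0)`. -/
noncomputable def karlssonMintonPolynomial (c : ι → ℂ) (m : ι → ℕ) : ℂ[X] :=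
  ∏ i, (ascPochhammer ℂ (m i)).comp (X + C (c i))

lemma karlssonMintonPolynomial_eval (c : ι → ℂ) (m : ι → ℕ) (x : ℂ) :
    (karlssonMintonPolynomial c m).eval x = ∏ i, poch (c i + x) (m i) := by
  simp only [karlssonMintonPolynomial, eval_prod, eval_comp, eval_add, eval_X, eval_C,
    poch_eq_ascPochhammer_eval, add_comm]

lemma natDegree_karlssonMintonPolynomial (c : ι → ℂ) (m : ι → ℕ) :
    (karlssonMintonPolynomial c m).natDegree = ∑ i, m i := by
  rw [karlssonMintonPolynomial, natDegree_prod_of_monic]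
  · simp only [natDegree_comp, ascPochhammer_natDegree, natDegree_X_add_C, mul_one]
  · exact fun i _ => (monic_ascPochhammer ℂ (m i)).comp_X_add_C (c i)

lemma hypergeometric_term_eq (a : ℂ) {b : ℂ} {c : ι → ℂ} (m : ι → ℕ)
    (hb : ∀ k : ℕ, b + k ≠ 0) (hc : ∀ i, ∀ k : ℕ, c i + k ≠ 0) (k : ℕ) :
    poch a k * poch b k * (∏ i, poch (c i + m i) k) /
        ((k.factorial : ℂ) * poch (b + 1) k * ∏ i, poch (c i) k) =
      b / (∏ i, poch (c i) (m i)) *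
        (Ring.multichoose a k * (karlssonMintonPolynomial c m).eval (k : ℂ) / (k + b)) := by
  rw [mul_div_mul_comm, mul_div_mul_comm, poch_div_factorial, poch_div_poch_add_one hb,
    ← prod_div_distrib, prod_congr rfl fun i _ => poch_add_natCast_div_poch (hc i) (m i) k,
    prod_div_distrib, karlssonMintonPolynomial_eval]
  ring

theorem stmt10_general (a b : ℂ) (c : ι → ℂ) (m : ι → ℕ)
    (hconv : (a + (∑ i, m i : ℕ)).re < 1)
    (hb : ∀ k : ℕ, b + k ≠ 0)
    (hc : ∀ i, ∀ k : ℕ, c i + k ≠ 0)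
    (hba : ∀ k : ℕ, 1 + b - a + k ≠ 0) :
    HasSum (fun k : ℕ => poch a k * poch b k * (∏ i, poch (c i + m i) k) /
        ((k.factorial : ℂ) * poch (b + 1) k * ∏ i, poch (c i) k))
      (Complex.Gamma (b + 1) * Complex.Gamma (1 - a) / Complex.Gamma (1 + b - a) *
        ∏ i, poch (c i - b) (m i) / poch (c i) (m i)) := by
  have hdeg : a.re + (karlssonMintonPolynomial c m).natDegree < 1 := by
    simpa only [natDegree_karlssonMintonPolynomial, Complex.add_re, Complex.natCast_re] using hconv
  have hsum := (hasSum_multichoose_mul_eval_div hdeg hb hba).mul_left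
    (b / ∏ i, poch (c i) (m i))
  convert! hsum using 1
  · exact funext (hypergeometric_term_eq a m hb hc)
  · rw [Complex.Gamma_add_one b (by simpa using hb 0), karlssonMintonPolynomial_eval,
      prod_div_distrib]
    simp only [← sub_eq_add_neg]
    ring

end KarlssonMinton

theorem stmt10 (r : ℕ) (a b : ℂ) (c : Fin r → ℂ) (m : Fin r → ℕ)
    (hconv : (a + (∑ i, m i : ℕ)).re < 1)
    (hb : ∀ k : ℕ, b + k ≠ 0)
    (hc : ∀ i, ∀ k : ℕ, c i + k ≠ 0)
    (hba : ∀ k : ℕ, b - a + k ≠ 0) :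
    (∑' k : ℕ, poch a k * poch b k * (∏ i, poch (c i + m i) k) /
        ((k.factorial : ℂ) * poch (b + 1) k * ∏ i, poch (c i) k)) =
      Complex.Gamma (b + 1) * Complex.Gamma (1 - a) / Complex.Gamma (1 + b - a) *
        ∏ i, poch (c i - b) (m i) / poch (c i) (m i) := by
  have hba' : 1 + b - a = b - a + 1 := by ring
  exact (stmt10_general a b c m hconv hb hc (hba' ▸ add_one_add_natCast_ne_zero hba)).tsum_eq
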